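/- arXiv:math/0403291 — 2 statements merged into one kernel-verified Lean document; each statement's English description precedes it below -/
import Mathlib

section
/- Let R be an integral domain, let {X_α} be a (possibly infinite) family of independent indeterminates over R, and let Q be an upper to zero in R[{X_α}] which is also a maximal t-ideal of R[{X_α}]. Then Q has height 1. -/
/-!
Suppose `0 ≠ P < Q` with `P` prime, let `K` be the quotient field of `R` and `D = R[{X_α}]`.
The contradiction comes from a finitely generated ideal inside `Q` whose `v`-closure is `D`.

Since `K[{X_α}]` is a localization of `D`, is factorial, and `P ∩ R = 0`, some `f ∈ P` is a prime
element of `K[{X_α}]` (`exists_prime_after_localization`); pick `g ∈ Q \ P`. Let `r ≠ 0` be the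
leading coefficient of `f` for some monomial order. As `r ∉ Q` and `Q` is a maximal `t`-ideal, there
is a finitely generated `J ≤ Q` with `(J + (r))_v = D` (`exists_fg_one_mem_vIdeal`).

Then `(J + (f, g))_v = D`. Indeed, let `u` in the quotient field of `D` satisfy
`u (J + (f, g)) ⊆ D`. From `u f, u g ∈ D` and `f ∤ g` in `K[{X_α}]` one gets `u ∈ K[{X_α}]`.
Dividing `u f ∈ D` by `f` from the top gives `r ^ N u ∈ D` for some `N` (`exists_C_dvd_pow_mul`).
Because `u J ⊆ D` and `(J + (r))_v = D`, the powers of `r` cancel one at a time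
(`exists_eq_of_pow_mul`), so `u ∈ D`.
-/

/-
Definitions following S. Gabelli, E. Houston, T. G. Lucas,
"The t#-property for integral domains".

All the star-operation notions (`v`, `t`, maximal `t`-ideals, etc.) are defined for a
commutative ring `R` via its total quotient field `FractionRing R`; in all theorems `R`
is assumed to be an integral domain, so `FractionRing R` is its quotient field `K`.
-/

noncomputable section

namespace TSharpPaper

variable (R : Type*) [CommRing R]

/-- The image of an integral ideal in the quotient field, as an `R`-submodule. -/
def idealSub (I : Ideal R) : Submodule R (FractionRing R) :=
  Submodule.map (Algebra.linearMap R (FractionRing R)) I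

/-- The divisorial closure `I_v = (I⁻¹)⁻¹` of an integral ideal, as an integral ideal.
Here for a submodule `J` of `K`, `1 / J = {x ∈ K : xJ ⊆ R}` is `J⁻¹`. -/
def vIdeal (I : Ideal R) : Ideal R :=
  Submodule.comap (Algebra.linearMap R (FractionRing R))
    ((1 : Submodule R (FractionRing R)) / (1 / idealSub R I))

/-- The `t`-closure `I_t = ⋃ J_v`, the union over all nonzero finitely generated
subideals `J` of `I`. -/
def tIdeal (I : Ideal R) : Ideal R :=
  ⨆ (J : Ideal R) (_ : J.FG) (_ : J ≠ ⊥) (_ : J ≤ I), vIdeal R J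

/-- A (nonzero) integral ideal is divisorial if `I = I_v`. -/
def IsDivisorialIdeal (I : Ideal R) : Prop := I ≠ ⊥ ∧ vIdeal R I = I

/-- A (nonzero) integral ideal is a `t`-ideal if `I = I_t`. -/
def IsTIdeal (I : Ideal R) : Prop := I ≠ ⊥ ∧ tIdeal R I = I

/-- A `t`-prime is a prime `t`-ideal. -/
def IsTPrime (P : Ideal R) : Prop := P.IsPrime ∧ IsTIdeal R P

/-- The set `t-Max(R)` of maximal `t`-ideals: integral ideals maximal among proper
integral `t`-ideals. -/
def tMax : Set (Ideal R) :=
  {M | IsTIdeal R M ∧ M ≠ ⊤ ∧ ∀ J : Ideal R, IsTIdeal R J → J ≠ ⊤ → M ≤ J → J = M}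

/-- The localization `R_P` of `R` at (the complement of) a prime `P`, viewed as a subset
of the quotient field. -/
def locSet (P : Ideal R) : Set (FractionRing R) :=
  {x | ∃ r s : R, s ∉ P ∧ x * algebraMap R (FractionRing R) s = algebraMap R (FractionRing R) r}

/-- The image of `R` in its quotient field. -/
def imageR : Set (FractionRing R) := Set.range (algebraMap R (FractionRing R))

/-- `R` is a `t#`-domain if `⋂_{M ∈ 𝔐₁} R_M ≠ ⋂_{M ∈ 𝔐₂} R_M` for any two distinct
subsets `𝔐₁, 𝔐₂` of `t-Max(R)`. -/
def IsTSharp : Prop :=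
  ∀ 𝔐₁ 𝔐₂ : Set (Ideal R), 𝔐₁ ⊆ tMax R → 𝔐₂ ⊆ tMax R → 𝔐₁ ≠ 𝔐₂ →
    (⋂ M ∈ 𝔐₁, locSet R M) ≠ ⋂ M ∈ 𝔐₂, locSet R M

/-- The conductor `(R :_R u) = {r ∈ R : r·u ∈ R}` of an element `u` of the quotient
field. -/
def colonIdeal (u : FractionRing R) : Ideal R :=
  Submodule.comap (Algebra.linearMap R (FractionRing R))
    (Submodule.comap (LinearMap.mulLeft R u) (1 : Submodule R (FractionRing R)))

/-- `R` is `v`-coherent if for each nonzero finitely generated ideal `I` of `R`,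
`I⁻¹ = J_v` for some finitely generated fractional ideal `J`. -/
def IsVCoherent : Prop :=
  ∀ I : Ideal R, I ≠ ⊥ → I.FG →
    ∃ J : Submodule R (FractionRing R), J.FG ∧
      (1 : Submodule R (FractionRing R)) / idealSub R I = 1 / (1 / J)

/-- An ideal is `v`-finite if it equals `J_v` for some finitely generated ideal `J`. -/
def IsVFinite (I : Ideal R) : Prop := ∃ J : Ideal R, J.FG ∧ I = vIdeal R J

/-- `Φ(Λ)`: the set of all integral `t`-ideals `I` of `R` with `I ⊄ P` for every
`P ∈ Λ`. -/
def Phi (Λ : Set (Ideal R)) : Set (Ideal R) :=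
  {I | IsTIdeal R I ∧ ∀ P ∈ Λ, ¬ I ≤ P}

/-- `Φ(Λ)` is `v`-finite if every `t`-ideal in `Φ(Λ)` contains a `v`-finite `t`-ideal
belonging to `Φ(Λ)`. -/
def PhiVFinite (Λ : Set (Ideal R)) : Prop :=
  ∀ I ∈ Phi R Λ, ∃ J ∈ Phi R Λ, J ≤ I ∧ IsVFinite R J

/-- The generalized ring of quotients `R_{Φ(Λ)} = {x ∈ K : xI ⊆ R for some I ∈ Φ(Λ)}`. -/
def RPhi (Λ : Set (Ideal R)) : Set (FractionRing R) :=
  {x | ∃ I ∈ Phi R Λ, ∀ a ∈ I, x * algebraMap R (FractionRing R) a ∈ imageR R}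

/-- `Λ` is a set of pairwise incomparable `t`-primes of `R`. -/
def IncompTPrimes (Λ : Set (Ideal R)) : Prop :=
  (∀ P ∈ Λ, IsTPrime R P) ∧ ∀ P ∈ Λ, ∀ Q ∈ Λ, P ≤ Q → P = Q

/-- `R` is a Prüfer `v`-multiplication domain if `R_M` is a valuation domain for every
maximal `t`-ideal `M` of `R`. -/
def IsPVMD [IsDomain R] : Prop :=
  ∀ M ∈ tMax R, ∀ x : FractionRing R, x ≠ 0 → x ∈ locSet R M ∨ x⁻¹ ∈ locSet R M

/-- `R` is a Mori domain: the ascending chain condition holds on integral divisorial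
ideals. -/
def IsMori : Prop :=
  ∀ f : ℕ → Ideal R, (∀ n, IsDivisorialIdeal R (f n)) → (∀ n, f n ≤ f (n + 1)) →
    ∃ n, ∀ m, n ≤ m → f m = f n

/-- The localization `T_Q` of a subring `T` of the quotient field of `R` at (the
complement of) an ideal `Q` of `T`, viewed as a subset of the quotient field of `R`. -/
def locSetSub (T : Subring (FractionRing R)) (Q : Ideal T) : Set (FractionRing R) :=
  {x | ∃ r s : T, s ∉ Q ∧ x * (s : FractionRing R) = (r : FractionRing R)}

/-- `T` is an overring of `R`: a subring of the quotient field containing (the image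
of) `R`. -/
def IsOverring (T : Subring (FractionRing R)) : Prop :=
  ∀ r : R, algebraMap R (FractionRing R) r ∈ T

/-- The canonical ring homomorphism from `R` to an overring `T`; `M ∩ R` is the
contraction `Ideal.comap (intoOverring R T h) M`. -/
def intoOverring (T : Subring (FractionRing R)) (h : IsOverring R T) : R →+* T :=
  (algebraMap R (FractionRing R)).codRestrict T h

/-- `T` is a `t`-flat overring of `R`: `T_M = R_{M ∩ R}` for each maximal `t`-ideal `M`
of `T`. -/
def IsTFlat (T : Subring (FractionRing R)) : Prop :=
  ∃ h : IsOverring R T, ∀ M ∈ tMax (↥T),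
    locSetSub R T M = locSet R (Ideal.comap (intoOverring R T h) M)

/-- `T` is `t`-linked over `R`: for each nonzero finitely generated ideal `I` of `R` with
`(R : I) = R` one has `(T : IT) = T`. -/
def IsTLinked (T : Subring (FractionRing R)) : Prop :=
  ∀ I : Ideal R, I ≠ ⊥ → I.FG →
    (1 : Submodule R (FractionRing R)) / idealSub R I = 1 →
    {x : FractionRing R | ∀ a ∈ I, x * algebraMap R (FractionRing R) a ∈ T} =
      (T : Set (FractionRing R))

/-- `T` is a `t`-subintersection of `R`: `T = ⋂_{P ∈ Λ} R_P` for some set `Λ` of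
`t`-primes of `R`. -/
def IsTSubintersection (T : Subring (FractionRing R)) : Prop :=
  ∃ Λ : Set (Ideal R), (∀ P ∈ Λ, IsTPrime R P) ∧
    (T : Set (FractionRing R)) = ⋂ P ∈ Λ, locSet R P

/-- `(P : P) = {x ∈ K : xP ⊆ P}`, as a subring of the quotient field of `R`. -/
def colonPP (P : Ideal R) : Subring (FractionRing R) where
  carrier := {x | ∀ a ∈ P, x * algebraMap R (FractionRing R) a ∈ idealSub R P}
  one_mem' := by
    intro a ha
    rw [one_mul]
    exact Submodule.mem_map_of_mem ha
  mul_mem' := by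
    intro x y hx hy a ha
    rcases hy a ha with ⟨b, hb, hby⟩
    rw [mul_assoc, ← hby]
    exact hx b hb
  add_mem' := by
    intro x y hx hy a ha
    rw [add_mul]
    exact Submodule.add_mem _ (hx a ha) (hy a ha)
  zero_mem' := by
    intro a ha
    rw [zero_mul]
    exact Submodule.zero_mem _
  neg_mem' := by
    intro x hx a ha
    rw [neg_mul]
    exact Submodule.neg_mem _ (hx a ha)

/-- `R` is a `t#_P`-domain: for sets `Λ₁ ≠ Λ₂` of `t`-primes such that `(P + Q)_t = R`
for distinct `P ∈ Λ₁`, `Q ∈ Λ₂`, one has `R_{Φ(Λ₁)} ≠ R_{Φ(Λ₂)}`. -/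
def IsTSharpP : Prop :=
  ∀ Λ₁ Λ₂ : Set (Ideal R), (∀ P ∈ Λ₁, IsTPrime R P) → (∀ Q ∈ Λ₂, IsTPrime R Q) →
    (∀ P ∈ Λ₁, ∀ Q ∈ Λ₂, P ≠ Q → tIdeal R (P ⊔ Q) = ⊤) →
    Λ₁ ≠ Λ₂ → RPhi R Λ₁ ≠ RPhi R Λ₂

/-- A `t`-localizing system of ideals of `R`: a set of integral `t`-ideals closed under
`t`-multiplication and satisfying the two localizing-system closure properties. -/
def IsTLocalizingSystem (Φ : Set (Ideal R)) : Prop :=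
  (∀ I ∈ Φ, IsTIdeal R I) ∧
  (∀ I ∈ Φ, ∀ J ∈ Φ, tIdeal R (I * J) ∈ Φ) ∧
  (∀ I ∈ Φ, ∀ J : Ideal R, IsTIdeal R J → I ≤ J → J ∈ Φ) ∧
  (∀ I ∈ Φ, ∀ J : Ideal R, IsTIdeal R J →
    (∀ a ∈ I, tIdeal R (Submodule.colon J (Ideal.span {a})) ∈ Φ) → J ∈ Φ)

/-- The ascending chain condition on `t`-primes of `R`. -/
def ACCTPrimes : Prop :=
  ∀ f : ℕ → Ideal R, (∀ n, IsTPrime R (f n)) → (∀ n, f n ≤ f (n + 1)) →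
    ∃ n, ∀ m, n ≤ m → f m = f n

/-- The ascending chain condition on radical `t`-ideals of `R`. -/
def ACCRadicalTIdeals : Prop :=
  ∀ f : ℕ → Ideal R, (∀ n, IsTIdeal R (f n) ∧ (f n).radical = f n) →
    (∀ n, f n ≤ f (n + 1)) → ∃ n, ∀ m, n ≤ m → f m = f n

/-- A prime `P` is branched if there is a `PR_P`-primary ideal of `R_P` different from
`PR_P` (the maximal ideal of `R_P`). -/
def IsBranched (P : Ideal R) (hP : P.IsPrime) : Prop :=
  letI := hP
  ∃ Q : Ideal (Localization.AtPrime P), Q.IsPrimary ∧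
    Q ≠ IsLocalRing.maximalIdeal (Localization.AtPrime P)

/-- A prime ideal of a domain has height one. -/
def HeightOne (Q : Ideal R) : Prop :=
  Q ≠ ⊥ ∧ ∀ P : Ideal R, P.IsPrime → P < Q → P = ⊥

/-- A nonzero integral ideal `I` is `t`-invertible: `(I I⁻¹)_t = R`. -/
def IsTInvertible (I : Ideal R) : Prop :=
  tIdeal R (Submodule.comap (Algebra.linearMap R (FractionRing R))
    (idealSub R I * ((1 : Submodule R (FractionRing R)) / idealSub R I))) = ⊤

variable {σ : Type*}

/-- An upper to zero: a prime ideal `Q` of `R[{X_α}]` with `Q ∩ R = 0`. -/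
def IsUpperToZero (Q : Ideal (MvPolynomial σ R)) : Prop :=
  Q.IsPrime ∧ Ideal.comap (MvPolynomial.C : R →+* MvPolynomial σ R) Q = ⊥

/-- The content `c(f)` of a polynomial: the ideal of `R` generated by its
coefficients. -/
def mvContent (f : MvPolynomial σ R) : Ideal R :=
  Ideal.span (Set.range fun m => MvPolynomial.coeff m f)

/-- The content `c(I)` of an ideal of `R[{X_α}]`: the ideal of `R` generated by the
coefficients of all polynomials in `I`. -/
def mvContentIdeal (Q : Ideal (MvPolynomial σ R)) : Ideal R :=
  Ideal.span {r | ∃ f ∈ Q, ∃ m, MvPolynomial.coeff m f = r}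

/-- `R({X_α})`: the localization of `R[{X_α}]` at the (multiplicatively closed) set of
polynomials of unit content. -/
def mvNagata (σ : Type*) : Type _ :=
  Localization (Submonoid.closure {f : MvPolynomial σ R | mvContent R f = ⊤})

instance (σ : Type*) : CommRing (mvNagata R σ) := by
  unfold mvNagata; infer_instance

/-- `R⟨{X_α}⟩`: the localization of `R[{X_α}]` at the (multiplicatively closed) set
`S = {f : c(f)_v = R}`. -/
def mvKronecker (σ : Type*) : Type _ :=
  Localization (Submonoid.closure {f : MvPolynomial σ R | vIdeal R (mvContent R f) = ⊤})

instance (σ : Type*) : CommRing (mvKronecker R σ) := by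
  unfold mvKronecker; infer_instance

/-! ### The `v`- and `t`-closures -/

theorem mem_vIdeal_iff {D : Type*} [CommRing D] {I : Ideal D} {a : D} :
    a ∈ vIdeal D I ↔ ∀ u : FractionRing D,
      (∀ x ∈ I, ∃ d : D, algebraMap D (FractionRing D) d = u * algebraMap D _ x) →
        ∃ d : D, algebraMap D (FractionRing D) d = u * algebraMap D _ a := by
  simp only [vIdeal, idealSub, Submodule.mem_comap, Submodule.mem_div_iff_forall_mul_mem,
    Submodule.mem_one, Submodule.mem_map, Algebra.linearMap_apply, forall_exists_index, and_imp,
    forall_apply_eq_imp_iff₂, mul_comm (algebraMap D (FractionRing D) a)]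

theorem le_vIdeal {D : Type*} [CommRing D] (I : Ideal D) : I ≤ vIdeal D I :=
  fun a ha => mem_vIdeal_iff.2 fun _ hu => hu a ha

theorem vIdeal_le_of_le_vIdeal {D : Type*} [CommRing D] {I J : Ideal D} (h : I ≤ vIdeal D J) :
    vIdeal D I ≤ vIdeal D J := fun _ ha =>
  mem_vIdeal_iff.2 fun u hu => mem_vIdeal_iff.1 ha u fun _ hx => mem_vIdeal_iff.1 (h hx) u hu

theorem vIdeal_mono {D : Type*} [CommRing D] {I J : Ideal D} (h : I ≤ J) :
    vIdeal D I ≤ vIdeal D J :=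
  vIdeal_le_of_le_vIdeal (h.trans (le_vIdeal J))

theorem vIdeal_le_tIdeal {D : Type*} [CommRing D] {I J : Ideal D} (hfg : J.FG) (h0 : J ≠ ⊥)
    (hJ : J ≤ I) : vIdeal D J ≤ tIdeal D I :=
  le_iSup_of_le J <| le_iSup_of_le hfg <| le_iSup_of_le h0 <| le_iSup_of_le hJ le_rfl

/-- The supremum defining the `t`-closure is directed, hence a union. -/
theorem exists_mem_vIdeal_of_mem_tIdeal {D : Type*} [CommRing D] {I : Ideal D} (hI : I ≠ ⊥) {a : D}
    (ha : a ∈ tIdeal D I) : ∃ J : Ideal D, J.FG ∧ J ≠ ⊥ ∧ J ≤ I ∧ a ∈ vIdeal D J := by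
  let S := {J : Ideal D // J.FG ∧ J ≠ ⊥ ∧ J ≤ I}
  obtain ⟨b, hb, hb0⟩ := Submodule.exists_mem_ne_zero_of_ne_bot hI
  have : Nonempty S := ⟨⟨Ideal.span {b}, ⟨{b}, by simp⟩, by simpa using hb0,
    (Ideal.span_singleton_le_iff_mem _).2 hb⟩⟩
  have hle : tIdeal D I ≤ ⨆ J : S, vIdeal D J.1 :=
    iSup_le fun J => iSup_le fun h1 => iSup_le fun h2 => iSup_le fun h3 =>
      le_iSup (fun J : S => vIdeal D J.1) ⟨J, h1, h2, h3⟩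
  have hdir : Directed (· ≤ ·) fun J : S => vIdeal D J.1 := fun A B =>
    ⟨⟨A.1 ⊔ B.1, Submodule.FG.sup A.2.1 B.2.1, fun h => A.2.2.1 (le_bot_iff.1 (le_sup_left.trans h.le)),
      sup_le A.2.2.2 B.2.2.2⟩, vIdeal_mono le_sup_left, vIdeal_mono le_sup_right⟩
  obtain ⟨J, hJ⟩ := (Submodule.mem_iSup_of_directed _ hdir).1 (hle ha)
  exact ⟨J.1, J.2.1, J.2.2.1, J.2.2.2, hJ⟩

theorem le_tIdeal {D : Type*} [CommRing D] (I : Ideal D) : I ≤ tIdeal D I := by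
  intro a ha
  by_cases h0 : a = 0
  · simp [h0]
  · exact vIdeal_le_tIdeal (J := Ideal.span {a}) ⟨{a}, by simp⟩ (by simpa using h0)
      ((Ideal.span_singleton_le_iff_mem _).2 ha)
      (le_vIdeal _ (Ideal.mem_span_singleton_self a))

/-- A finitely generated ideal inside `I_t` already lies in `J_v` for one finitely generated
`J ≤ I`. -/
theorem exists_le_vIdeal_of_le_tIdeal {D : Type*} [CommRing D] {I A : Ideal D} (hI : I ≠ ⊥)
    (hA : A.FG) (hAI : A ≤ tIdeal D I) :
    ∃ J : Ideal D, J.FG ∧ J ≠ ⊥ ∧ J ≤ I ∧ A ≤ vIdeal D J := by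
  classical
  induction A, hA using Submodule.fg_induction with
  | singleton x =>
    obtain ⟨J, h1, h2, h3, h4⟩ := exists_mem_vIdeal_of_mem_tIdeal hI
      (hAI (Submodule.mem_span_singleton_self x))
    exact ⟨J, h1, h2, h3, (Submodule.span_singleton_le_iff_mem _ _).2 h4⟩
  | sup A B _ _ ihA ihB =>
    obtain ⟨J, h1, h2, h3, h4⟩ := ihA (le_sup_left.trans hAI)
    obtain ⟨L, k1, -, k3, k4⟩ := ihB (le_sup_right.trans hAI)
    exact ⟨J ⊔ L, Submodule.FG.sup h1 k1, fun h => h2 (le_bot_iff.1 (h ▸ le_sup_left)), sup_le h3 k3,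
      sup_le (h4.trans (vIdeal_mono le_sup_left)) (k4.trans (vIdeal_mono le_sup_right))⟩

theorem isTIdeal_tIdeal {D : Type*} [CommRing D] {I : Ideal D} (hI : I ≠ ⊥) :
    IsTIdeal D (tIdeal D I) := by
  have h0 : tIdeal D I ≠ ⊥ := fun h => hI (le_bot_iff.1 (h ▸ le_tIdeal I))
  refine ⟨h0, le_antisymm (fun a ha => ?_) (le_tIdeal _)⟩
  obtain ⟨A, hA, -, hAI, haA⟩ := exists_mem_vIdeal_of_mem_tIdeal h0 ha
  obtain ⟨J, h1, h2, h3, h4⟩ := exists_le_vIdeal_of_le_tIdeal hI hA hAI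
  exact vIdeal_le_tIdeal h1 h2 h3 (vIdeal_le_of_le_vIdeal h4 haA)

/-- If `Q` is a maximal `t`-ideal and `r ∉ Q`, then `(J + (r))_v = D` for some finitely generated
`J ≤ Q`. -/
theorem exists_fg_one_mem_vIdeal {D : Type*} [CommRing D] {Q : Ideal D} (hQ : Q ∈ tMax D) {r : D}
    (hr : r ∉ Q) : ∃ J : Ideal D, J.FG ∧ J ≤ Q ∧ 1 ∈ vIdeal D (J ⊔ Ideal.span {r}) := by
  classical
  obtain ⟨hQt, -, hQmax⟩ := hQ
  have hI : Q ⊔ Ideal.span {r} ≠ ⊥ := fun h => hQt.1 (le_bot_iff.1 (h ▸ le_sup_left))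
  have htop : tIdeal D (Q ⊔ Ideal.span {r}) = ⊤ := by
    by_contra hne
    have h := hQmax _ (isTIdeal_tIdeal hI) hne (le_sup_left.trans (le_tIdeal _))
    exact hr (h ▸ le_tIdeal _ (Ideal.mem_sup_right (Ideal.mem_span_singleton_self r)))
  obtain ⟨A, hA, -, hAI, h1⟩ := exists_mem_vIdeal_of_mem_tIdeal hI (htop ▸ Submodule.mem_top)
  -- Trade the generators of `A ≤ Q + (r)` for generators in `Q`, at the cost of adding `r`.
  have key : ∃ J : Ideal D, J.FG ∧ J ≤ Q ∧ A ≤ J ⊔ Ideal.span {r} := by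
    clear h1
    induction A, hA using Submodule.fg_induction with
    | singleton x =>
      obtain ⟨q, hq, y, hy, rfl⟩ := Submodule.mem_sup.1
        (hAI (Submodule.mem_span_singleton_self x))
      exact ⟨Ideal.span {q}, ⟨{q}, by simp⟩, (Ideal.span_singleton_le_iff_mem _).2 hq,
        (Submodule.span_singleton_le_iff_mem _ _).2 (Submodule.add_mem_sup
          (Ideal.mem_span_singleton_self q) hy)⟩
    | sup A B _ _ ihA ihB =>
      obtain ⟨J, h1, h2, h3⟩ := ihA (le_sup_left.trans hAI)
      obtain ⟨L, k1, k2, k3⟩ := ihB (le_sup_right.trans hAI)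
      exact ⟨J ⊔ L, Submodule.FG.sup h1 k1, sup_le h2 k2, sup_le
        (h3.trans (sup_le_sup_right le_sup_left _)) (k3.trans (sup_le_sup_right le_sup_right _))⟩
  obtain ⟨J, hJ, hJQ, hAJ⟩ := key
  exact ⟨J, hJ, hJQ, vIdeal_mono hAJ h1⟩

/-- If `(J + (r))_v = D`, then every `u ∈ J⁻¹` with `u r ^ n ∈ D` for some `n` lies in `D`. -/
theorem exists_eq_of_pow_mul {D : Type*} [CommRing D] {J : Ideal D} {r : D}
    (h1 : 1 ∈ vIdeal D (J ⊔ Ideal.span {r})) {u : FractionRing D}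
    (hu : ∀ x ∈ J, ∃ d : D, algebraMap D (FractionRing D) d = u * algebraMap D _ x) (n : ℕ)
    (hn : ∃ d : D, algebraMap D (FractionRing D) d = u * algebraMap D _ (r ^ n)) :
    ∃ d : D, algebraMap D (FractionRing D) d = u := by
  induction n with
  | zero => simpa using hn
  | succ n ih =>
    apply ih
    have := mem_vIdeal_iff.1 h1 (u * algebraMap D _ (r ^ n)) ?_
    · simpa using this
    · intro x hx
      obtain ⟨j, hj, y, hy, rfl⟩ := Submodule.mem_sup.1 hx
      obtain ⟨c, rfl⟩ := Ideal.mem_span_singleton'.1 hy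
      obtain ⟨d, hd⟩ := hu j hj
      obtain ⟨e, he⟩ := hn
      refine ⟨r ^ n * d + c * e, ?_⟩
      simp only [map_add, map_mul, map_pow] at hd he ⊢
      rw [hd, he]
      ring

/-! ### Division in polynomial rings -/

/-- If `s` divides `f w`, then `s` divides `r ^ N w`, where `r` is the leading coefficient of
`f`. Long division from the top: `s` divides `r` times the leading term of `w`, and removing that
term shrinks the support of `w`. -/
theorem exists_C_dvd_pow_mul {R σ : Type*} [CommRing R] (m : MonomialOrder σ) (s : R)
    (f : MvPolynomial σ R) (n : ℕ) (w : MvPolynomial σ R) (hn : w.support.card ≤ n)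
    (h : MvPolynomial.C s ∣ f * w) :
    ∃ N : ℕ, MvPolynomial.C s ∣ MvPolynomial.C (m.leadingCoeff f) ^ N * w := by
  classical
  induction n generalizing w with
  | zero =>
    have : w = 0 := by simpa using hn
    exact ⟨0, by simp [this]⟩
  | succ n ih =>
    by_cases hw : w = 0
    · exact ⟨0, by simp [hw]⟩
    have hlead : s ∣ m.leadingCoeff f * m.leadingCoeff w := by
      rw [← m.coeff_mul_of_degree_add]
      exact (MvPolynomial.C_dvd_iff_dvd_coeff _ _).1 h _
    set r := m.leadingCoeff f
    set d := m.degree w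
    set c := m.leadingCoeff w
    have hmon : MvPolynomial.C s ∣ MvPolynomial.C r * MvPolynomial.monomial d c := by
      rw [MvPolynomial.C_mul_monomial, MvPolynomial.C_dvd_iff_dvd_coeff]
      intro i
      rw [MvPolynomial.coeff_monomial]
      split_ifs
      · exact hlead
      · exact dvd_zero _
    have hsupp : (MvPolynomial.C r * (w - MvPolynomial.monomial d c)).support.card ≤ n := by
      have hsub : (MvPolynomial.C r * (w - MvPolynomial.monomial d c)).support
          ⊆ w.support.erase d := by
        intro i hi
        rw [MvPolynomial.mem_support_iff, MvPolynomial.coeff_C_mul, MvPolynomial.coeff_sub,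
          MvPolynomial.coeff_monomial] at hi
        rw [Finset.mem_erase, MvPolynomial.mem_support_iff]
        by_cases hid : d = i
        · refine absurd ?_ hi
          subst hid
          simp [c, d, MonomialOrder.leadingCoeff]
        · rw [if_neg hid, sub_zero] at hi
          exact ⟨fun e => hid e.symm, right_ne_zero_of_mul hi⟩
      have hd : d ∈ w.support := m.degree_mem_support hw
      have := Finset.card_le_card hsub
      rw [Finset.card_erase_of_mem hd] at this
      omega
    have hdiv : MvPolynomial.C s ∣ f * (MvPolynomial.C r * (w - MvPolynomial.monomial d c)) := by
      have e : f * (MvPolynomial.C r * (w - MvPolynomial.monomial d c)) =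
          MvPolynomial.C r * (f * w) - f * (MvPolynomial.C r * MvPolynomial.monomial d c) := by
        ring
      rw [e]
      exact dvd_sub (h.mul_left _) (hmon.mul_left _)
    obtain ⟨N, hN⟩ := ih _ hsupp hdiv
    refine ⟨N + 1, ?_⟩
    have e : MvPolynomial.C r ^ (N + 1) * w =
        MvPolynomial.C r ^ N * (MvPolynomial.C r * (w - MvPolynomial.monomial d c)) +
          MvPolynomial.C r ^ N * (MvPolynomial.C r * MvPolynomial.monomial d c) := by
      ring
    rw [e]
    exact dvd_add hN (hmon.mul_left _)

/-- The lexicographic order for the dual of a well-order on the variables. -/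
theorem exists_monomialOrder.{u} (σ : Type u) : Nonempty (MonomialOrder.{u, u} σ) := by
  obtain ⟨i, hi⟩ := exists_wellFoundedLT σ
  let j : LinearOrder σ := inferInstanceAs (LinearOrder σᵒᵈ)
  have : @WellFoundedGT σ j.toLT := ⟨hi.wf⟩
  exact ⟨MonomialOrder.lex⟩

/-- A nonzero prime `P` of `D` disjoint from `M`, where the localization `S` of `D` at `M` is
factorial, contains an `f ≠ 0` that is a prime element of `S`. If `g ∉ P`, then `f` does not divide
`g` in `S`, so `f ∣ a g` forces `f ∣ a` in `S`; clearing the denominator gives some `s ∈ M` with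
`f ∣ s a` in `D`. -/
theorem exists_prime_after_localization {D : Type*} (S : Type*) [CommRing D] [IsDomain D]
    [CommRing S] [IsDomain S] [UniqueFactorizationMonoid S] [Algebra D S] (M : Submonoid D)
    [IsLocalization M S] {P : Ideal D} (hP : P.IsPrime) (hP0 : P ≠ ⊥)
    (hd : Disjoint (M : Set D) (P : Set D)) :
    ∃ f ∈ P, f ≠ 0 ∧ ∀ g ∉ P, ∀ a : D, f ∣ a * g → ∃ s ∈ M, f ∣ s * a := by
  have hM : M ≤ nonZeroDivisors D := le_nonZeroDivisors_of_noZeroDivisors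
    fun h => Set.disjoint_left.1 hd h P.zero_mem
  have hprime := IsLocalization.isPrime_of_isPrime_disjoint M S P hP hd
  have hne : Ideal.map (algebraMap D S) P ≠ ⊥ := by
    rw [Ne, Ideal.map_eq_bot_iff_of_injective (IsLocalization.injective S hM)]
    exact hP0
  obtain ⟨x, hx, hxp⟩ := hprime.exists_mem_prime_of_ne_bot hne
  obtain ⟨⟨⟨f, hf⟩, t⟩, hft⟩ := (IsLocalization.mem_map_algebraMap_iff M S).1 hx
  have hfp : Prime (algebraMap D S f) := by
    have : Associated x (algebraMap D S f) :=
      ⟨(IsLocalization.map_units S t).unit, by simpa using hft⟩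
    exact this.prime hxp
  refine ⟨f, hf, fun h => hfp.ne_zero (by simp [h]), fun g hg a hag => ?_⟩
  have hdvd : algebraMap D S f ∣ algebraMap D S (a * g) := map_dvd _ hag
  rw [map_mul] at hdvd
  rcases hfp.dvd_or_dvd hdvd with h | ⟨w, hw⟩
  · obtain ⟨w, hw⟩ := h
    obtain ⟨⟨w', s⟩, hs⟩ := IsLocalization.surj M w
    have e : algebraMap D S (s * a) = algebraMap D S (f * w') := by
      rw [map_mul, map_mul, hw, ← hs]
      ring
    exact ⟨s, s.2, w', IsLocalization.injective S hM e⟩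
  · refine absurd ?_ hg
    have hmem : algebraMap D S g ∈ Ideal.map (algebraMap D S) P := by
      rw [hw]
      exact Ideal.mul_mem_right _ _ (Ideal.mem_map_of_mem _ hf)
    rw [← IsLocalization.under_map_of_isPrime_disjoint M S hP hd]
    exact hmem

/-! ### Height of an upper to zero -/

/-- **Lemma (3.2).**  An upper to zero in `R[{X_α}]` which is a maximal `t`-ideal has
height one. -/
theorem upper_to_zero_maximal_t_height_one (R : Type*) [CommRing R] [IsDomain R]
    (σ : Type*) (Q : Ideal (MvPolynomial σ R)) (hQ : IsUpperToZero R Q)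
    (hmax : Q ∈ tMax (MvPolynomial σ R)) :
    HeightOne (MvPolynomial σ R) Q := by
  classical
  obtain ⟨hQt, hQtop, -⟩ := id hmax
  refine ⟨hQt.1, fun P hP hPQ => ?_⟩
  by_contra hP0
  have hCQ : ∀ r : R, r ≠ 0 → MvPolynomial.C r ∉ Q := fun r hr h => hr <| by
    have : r ∈ Ideal.comap (MvPolynomial.C : R →+* MvPolynomial σ R) Q := h
    rwa [hQ.2, Ideal.mem_bot] at this
  have hdisj : Disjoint (((nonZeroDivisors R).map (MvPolynomial.C (σ := σ)) :
      Submonoid (MvPolynomial σ R)) : Set (MvPolynomial σ R)) (P : Set (MvPolynomial σ R)) := by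
    rw [Set.disjoint_left]
    rintro _ ⟨r, hr, rfl⟩ h
    exact hCQ r (nonZeroDivisors.ne_zero hr) (hPQ.le h)
  let _ : Algebra (MvPolynomial σ R) (MvPolynomial σ (FractionRing R)) :=
    MvPolynomial.algebraMvPolynomial
  obtain ⟨f, hfP, hf0, hfdvd⟩ := exists_prime_after_localization
    (MvPolynomial σ (FractionRing R)) _ hP hP0 hdisj
  obtain ⟨g, hgQ, hgP⟩ := SetLike.exists_of_lt hPQ
  obtain ⟨m⟩ := exists_monomialOrder σ
  have hr0 : m.leadingCoeff f ≠ 0 := m.leadingCoeff_ne_zero_iff.2 hf0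
  obtain ⟨J, hJ, hJQ, hJ1⟩ := exists_fg_one_mem_vIdeal hmax (hCQ _ hr0)
  -- `(J + (f, g))_v` is the whole ring, although `J + (f, g)` lies in the `t`-ideal `Q`.
  have hfI : f ∈ J ⊔ Ideal.span {f, g} := Ideal.mem_sup_right (Ideal.subset_span (by simp))
  have hgI : g ∈ J ⊔ Ideal.span {f, g} := Ideal.mem_sup_right (Ideal.subset_span (by simp))
  have h1 : (1 : MvPolynomial σ R) ∈ vIdeal _ (J ⊔ Ideal.span {f, g}) := by
    rw [mem_vIdeal_iff]
    intro u hu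
    obtain ⟨a, ha⟩ := hu f hfI
    obtain ⟨b, hb⟩ := hu g hgI
    have hinj := IsFractionRing.injective (MvPolynomial σ R) (FractionRing (MvPolynomial σ R))
    have hag : f ∣ a * g := ⟨b, hinj (by rw [map_mul, map_mul, ha, hb]; ring)⟩
    obtain ⟨_, ⟨s, hs, rfl⟩, w, hw⟩ := hfdvd g hgP a hag
    obtain ⟨N, v, hv⟩ := exists_C_dvd_pow_mul m s f _ w le_rfl ⟨a, hw.symm⟩
    have hs0 : (MvPolynomial.C s : MvPolynomial σ R) ≠ 0 := by
      simpa using nonZeroDivisors.ne_zero hs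
    -- Here `u = a / f = w / s`, so `r ^ N u = v`.
    have hva : MvPolynomial.C (m.leadingCoeff f) ^ N * a = f * v := by
      apply mul_left_cancel₀ hs0
      calc _ = MvPolynomial.C (m.leadingCoeff f) ^ N * (MvPolynomial.C s * a) := by ring
        _ = f * (MvPolynomial.C (m.leadingCoeff f) ^ N * w) := by
          rw [show MvPolynomial.C s * a = f * w from hw]; ring
        _ = _ := by rw [hv]; ring
    rw [map_one, mul_one]
    refine exists_eq_of_pow_mul hJ1 (fun x hx => hu x (Ideal.mem_sup_left hx)) N ⟨v, ?_⟩
    have hf0' : algebraMap (MvPolynomial σ R) (FractionRing (MvPolynomial σ R)) f ≠ 0 := by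
      rwa [Ne, map_eq_zero_iff _ hinj]
    apply mul_left_cancel₀ hf0'
    rw [← map_mul, ← hva, map_mul, ha]
    ring
  refine hQtop ((Ideal.eq_top_iff_one _).2 ?_)
  rw [← hQt.2]
  refine vIdeal_le_tIdeal (Submodule.FG.sup hJ ⟨{f, g}, by simp⟩) (fun h => hf0 ?_) (sup_le hJQ ?_) h1
  · rwa [h, Ideal.mem_bot] at hfI
  · rw [Ideal.span_le]
    rintro x (rfl | rfl)
    exacts [hPQ.le hfP, hgQ]

end TSharpPaper
end
end

section
/- If R is a t#-domain and {X_α} is any (possibly infinite) family of independent indeterminates over R, then the polynomial ring R[{X_α}] is also a t#-domain. -/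
/-!
A domain `D` is `t#` if and only if every maximal `t`-ideal `M` has a fraction lying in `D_N` for
all other maximal `t`-ideals `N` but not in `D_M` (`isTSharp_iff`). Write `T = R[{X_α}]` and let
`K` be the quotient field of `R`.

The maximal `t`-ideals `Q` of `T` are of two kinds (`tMax_mvPolynomial`). If the content ideal of
`Q` has proper `t`-closure, then `Q = P[{X_α}]` for a maximal `t`-ideal `P` of `R`. Otherwise `Q`
contains a finite set `G` whose coefficients generate an ideal of `R` with inverse `R`. Applied
to `R / bR`, McCoy's theorem for families (`exists_const_annihilator`) shows that an element of
`K[{X_α}]` multiplying such a `G` into `T` lies in `T`. Hence `Q ∩ R = 0` (`C_mem_upper`), and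
`Q K[{X_α}]` is generated by a prime element `f ∈ Q` (`exists_generator`): if `f ∤ q` over `K`,
the set `{f, q} ∪ G` would have trivial inverse.

If `Q = P[{X_α}]`, a fraction of `R` separating `P` also separates `Q`, since ideals of the second
kind contain no nonzero constant. If `Q` is of the second kind, choose a nonzero constant `d` with
`f ∣ d g` for all `g ∈ G`. Then `d / f` separates `Q`: it equals `(d g / f) / g` with some `g ∈ G`
outside any given `P[{X_α}]`; the element `f` lies in no other maximal `t`-ideal of the second
kind; and `f ∈ Q` while `d ∉ Q`.

Inverses and `t`-closures are handled by divisibility in the ring (`IsGV`, `TProper`), which avoids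
computing in quotient fields beyond the translation lemmas `mem_tMax_iff` and `isTSharp_iff`.
-/

/-
Definitions following S. Gabelli, E. Houston, T. G. Lucas,
"The t#-property for integral domains".

All the star-operation notions (`v`, `t`, maximal `t`-ideals, etc.) are defined for a
commutative ring `R` via its total quotient field `FractionRing R`; in all theorems `R`
is assumed to be an integral domain, so `FractionRing R` is its quotient field `K`.
-/

noncomputable section

namespace TSharpPaper

variable (R : Type*) [CommRing R]

variable {σ : Type*}

/-! ### Ideals without finite subsets of trivial inverse -/

section Divisibility

variable {R}

/-- `(S)⁻¹ = R`, written without fractions: if `a / b` multiplies `S` into `R`, then `a / b`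
already lies in `R`. -/
def IsGV (S : Set R) : Prop :=
  ∀ a b : R, b ≠ 0 → (∀ s ∈ S, b ∣ a * s) → b ∣ a

/-- No finite subset of `I` has inverse `R`. For nonzero `I` in a domain this says that `I_t ≠ R`;
asking it also of `⊥` keeps the condition inherited by all subideals. -/
def TProper (I : Ideal R) : Prop :=
  ∀ S : Set R, S.Finite → S ⊆ I → ¬ IsGV S

lemma IsGV.mono {S T : Set R} (hS : IsGV S) (h : S ⊆ T) : IsGV T :=
  fun a b hb hT => hS a b hb fun s hs => hT s (h hs)

lemma TProper.mono {I J : Ideal R} (hJ : TProper J) (h : I ≤ J) : TProper I :=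
  fun S hS hSI => hJ S hS fun _ hs => h (hSI hs)

lemma TProper.one_notMem {I : Ideal R} (h : TProper I) : (1 : R) ∉ I := fun h1 =>
  h {1} (Set.finite_singleton 1) (by simpa using h1) fun a b _ hs => by simpa using hs 1 rfl

/-- A fraction `a / b` that multiplies `S` into `R` multiplies the ideal spanned by `S` into `R`. -/
lemma dvd_of_mem_span {S : Set R} {a b r : R} (h : ∀ s ∈ S, b ∣ a * s)
    (hr : r ∈ Ideal.span S) : b ∣ a * r := by
  induction hr using Submodule.span_induction with
  | mem x hx => exact h x hx
  | zero => simp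
  | add x y _ _ hx hy => rw [mul_add]; exact dvd_add hx hy
  | smul c x _ hx => rw [smul_eq_mul, mul_left_comm]; exact hx.mul_left c

/-- Zorn's lemma applies since `TProper` only constrains finite subsets. -/
lemma TProper.exists_le_maximal {I : Ideal R} (hI : TProper I) :
    ∃ M, I ≤ M ∧ Maximal TProper M := by
  refine zorn_le_nonempty₀ {J : Ideal R | TProper J} ?_ I hI
  intro c hc hchain y hy
  refine ⟨sSup c, ?_, fun z hz => le_sSup hz⟩
  intro S hS hSc
  have hdir : DirectedOn (· ≤ ·) c := hchain.directedOn
  have : ∃ J ∈ c, S ⊆ J := by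
    refine Set.Finite.induction_on_subset S hS ⟨y, hy, by simp⟩ ?_
    rintro a T haS _ _ ⟨J, hJ, hTJ⟩
    obtain ⟨J', hJ', haJ'⟩ := (Submodule.mem_sSup_of_directed ⟨y, hy⟩ hdir).1 (hSc haS)
    obtain ⟨L, hL, h1, h2⟩ := hdir J hJ J' hJ'
    exact ⟨L, hL, Set.insert_subset (h2 haJ') fun _ ht => h1 (hTJ ht)⟩
  obtain ⟨J, hJ, hSJ⟩ := this
  exact hc hJ S hS hSJ

lemma exists_isGV_of_not_tProper {I : Ideal R} (h : ¬ TProper I) :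
    ∃ S : Set R, S.Finite ∧ S ⊆ I ∧ IsGV S := by
  unfold TProper at h
  push Not at h
  exact h

/-- If finite subsets of `M + (x)` and `M + (y)` had trivial inverses, so would their product
set, which lies in `M` as soon as `xy ∈ M`. -/
lemma isPrime_of_maximal {M : Ideal R} (hM : Maximal TProper M) : M.IsPrime := by
  refine ⟨fun h => hM.prop.one_notMem (h ▸ Submodule.mem_top), ?_⟩
  intro x y hxy
  by_contra hcon
  push Not at hcon
  have key : ∀ z, z ∉ M → ∃ S : Set R, S.Finite ∧ S ⊆ (M ⊔ Ideal.span {z} : Ideal R) ∧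
      IsGV S := by
    intro z hz
    refine exists_isGV_of_not_tProper fun h => hz ?_
    exact hM.le_of_ge h le_sup_left
      (Ideal.mem_sup_right (Ideal.mem_span_singleton_self z))
  obtain ⟨S, hS, hSM, hSu⟩ := key x hcon.1
  obtain ⟨T, hT, hTM, hTu⟩ := key y hcon.2
  refine hM.prop (Set.image2 (· * ·) S T) (hS.image2 _ hT) ?_ ?_
  · rintro _ ⟨s, hs, t, ht, rfl⟩
    obtain ⟨m, hm, u, hu, rfl⟩ := Submodule.mem_sup.1 (hSM hs)
    obtain ⟨n, hn, v, hv, rfl⟩ := Submodule.mem_sup.1 (hTM ht)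
    obtain ⟨c, rfl⟩ := Ideal.mem_span_singleton'.1 hu
    obtain ⟨d, rfl⟩ := Ideal.mem_span_singleton'.1 hv
    have : (m + c * x) * (n + d * y) = (n + d * y) * m + c * x * n + c * d * (x * y) := by ring
    show (m + c * x) * (n + d * y) ∈ M
    rw [this]
    exact add_mem (add_mem (M.mul_mem_left _ hm) (M.mul_mem_left _ hn)) (M.mul_mem_left _ hxy)
  · intro a b hb h
    refine hTu a b hb fun t ht => hSu _ b hb fun s hs => ?_
    have := h _ ⟨s, hs, t, ht, rfl⟩
    rwa [mul_assoc, mul_comm t s]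

end Divisibility

/-! ### Maximal t-ideals and the t#-property via divisibility -/

section TMax

variable {R}

local notation "φ" => algebraMap R (FractionRing R)

lemma mem_one_div_idealSub {J : Ideal R} {x : FractionRing R} :
    x ∈ (1 : Submodule R (FractionRing R)) / idealSub R J ↔
      ∀ s ∈ J, ∃ r, φ r = x * φ s := by
  simp [Submodule.mem_div_iff_forall_mul_mem, idealSub, Submodule.mem_one]

variable [IsDomain R]

lemma exists_frac_iff {a b r : R} (hb : b ≠ 0) :
    (∃ c, φ c = φ a / φ b * φ r) ↔ b ∣ a * r := by
  have hb' : φ b ≠ 0 := by simpa using hb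
  constructor
  · rintro ⟨c, hc⟩
    refine ⟨c, IsFractionRing.injective R (FractionRing R) ?_⟩
    rw [map_mul, map_mul, hc]; field_simp
  · rintro ⟨c, hc⟩
    refine ⟨c, ?_⟩
    have : φ a * φ r = φ b * φ c := by rw [← map_mul, ← map_mul, hc]
    field_simp; rw [this]; ring

lemma mem_vIdeal {J : Ideal R} {r : R} :
    r ∈ vIdeal R J ↔ ∀ a b : R, b ≠ 0 → (∀ s ∈ J, b ∣ a * s) → b ∣ a * r := by
  rw [vIdeal, Submodule.mem_comap, Submodule.mem_div_iff_forall_mul_mem]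
  simp only [Algebra.linearMap_apply, mem_one_div_idealSub, Submodule.mem_one]
  constructor
  · intro h a b hb hs
    rw [← exists_frac_iff hb]
    obtain ⟨c, hc⟩ := h (φ a / φ b) fun s hsJ => (exists_frac_iff hb).2 (hs s hsJ)
    exact ⟨c, by rw [hc, mul_comm]⟩
  · intro h x hx
    obtain ⟨a, b, hb, rfl⟩ := IsFractionRing.div_surjective (A := R) x
    have hb0 : b ≠ 0 := nonZeroDivisors.ne_zero hb
    obtain ⟨c, hc⟩ := (exists_frac_iff hb0).2
      (h a b hb0 fun s hs => (exists_frac_iff hb0).1 (hx s hs))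
    exact ⟨c, by rw [hc, mul_comm]⟩

lemma isTIdeal_iff {I : Ideal R} :
    IsTIdeal R I ↔ I ≠ ⊥ ∧ ∀ J : Ideal R, J.FG → J ≠ ⊥ → J ≤ I → vIdeal R J ≤ I := by
  refine and_congr_right fun _ => ⟨fun h J h1 h2 h3 => ?_, fun h => ?_⟩
  · conv_rhs => rw [← h]
    exact le_iSup_of_le J (le_iSup_of_le h1 (le_iSup_of_le h2 (le_iSup_of_le h3 le_rfl)))
  · refine le_antisymm (iSup_le fun J => iSup_le fun h1 => iSup_le fun h2 =>
      iSup_le fun h3 => h J h1 h2 h3) fun r hr => ?_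
    by_cases hr0 : r = 0
    · rw [hr0]; exact zero_mem _
    · have h1 : vIdeal R (Ideal.span {r}) ≤ tIdeal R I :=
        le_iSup_of_le (Ideal.span {r}) (le_iSup_of_le (Submodule.fg_span_singleton r)
          (le_iSup_of_le (by simpa using hr0)
            (le_iSup_of_le (by simpa [Ideal.span_le] using hr) le_rfl)))
      exact h1 (mem_vIdeal.2 fun a b _ hs => hs r (Ideal.mem_span_singleton_self r))

lemma IsTIdeal.tProper {I : Ideal R} (hI : IsTIdeal R I) (h : I ≠ ⊤) : TProper I := by
  intro S hS hSI hu
  obtain ⟨h0, hJ⟩ := isTIdeal_iff.1 hI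
  obtain ⟨x, hx, hx0⟩ := Submodule.exists_mem_ne_zero_of_ne_bot h0
  -- Adjoining `x` makes the ideal spanned by `S` nonzero.
  have hle : vIdeal R (Ideal.span (insert x S)) ≤ I := by
    refine hJ _ (Submodule.fg_span (hS.insert x)) ?_ (Ideal.span_le.2 (Set.insert_subset hx hSI))
    intro hbot
    exact hx0 ((Submodule.eq_bot_iff _).1 hbot x (Ideal.subset_span (Set.mem_insert _ _)))
  refine h ((Ideal.eq_top_iff_one I).2 (hle (mem_vIdeal.2 fun a b hb hs => ?_)))
  rw [mul_one]
  exact hu a b hb fun s hs' => hs s (Ideal.subset_span (Set.mem_insert_of_mem _ hs'))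

lemma isTIdeal_of_maximal {M : Ideal R} (hM : Maximal TProper M) (h0 : M ≠ ⊥) :
    IsTIdeal R M := by
  refine isTIdeal_iff.2 ⟨h0, fun J hJ _ hJM => ?_⟩
  obtain ⟨G, rfl⟩ := hJ
  -- By maximality it is enough that `M + J_v` is still `t`-proper.
  refine le_sup_right.trans (hM.le_of_ge (y := M ⊔ vIdeal R (Ideal.span G)) ?_ le_sup_left)
  intro S hS hSM hu
  -- Write each `s ∈ S` as `m s + n s` and replace `S` by the finite set `m '' S ∪ G ⊆ M`.
  have hdec : ∀ s : S, ∃ m ∈ M, ∃ n ∈ vIdeal R (Ideal.span (G : Set R)), m + n = s :=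
    fun s => Submodule.mem_sup.1 (hSM s.2)
  choose m hm n hn hmn using hdec
  have := hS.to_subtype
  refine hM.prop (Set.range m ∪ G) ((Set.finite_range m).union G.finite_toSet) ?_ ?_
  · rintro x (⟨s, rfl⟩ | hx)
    · exact hm s
    · exact hJM (Ideal.subset_span hx)
  · intro a b hb h
    refine hu a b hb fun s hs => ?_
    have hs' : m ⟨s, hs⟩ + n ⟨s, hs⟩ = s := hmn ⟨s, hs⟩
    rw [← hs', mul_add]
    refine dvd_add (h _ (Or.inl ⟨_, rfl⟩)) (mem_vIdeal.1 (hn ⟨s, hs⟩) a b hb fun t ht => ?_)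
    exact dvd_of_mem_span (fun g hg => h g (Or.inr hg)) ht

/-- Maximal `t`-ideals are the nonzero ideals maximal for `TProper`; every later argument about
them goes through this description. -/
lemma mem_tMax_iff {M : Ideal R} : M ∈ tMax R ↔ M ≠ ⊥ ∧ Maximal TProper M := by
  constructor
  · rintro ⟨hM, htop, hmax⟩
    refine ⟨hM.1, hM.tProper htop, fun J hJ hMJ => ?_⟩
    obtain ⟨L, hJL, hL⟩ := hJ.exists_le_maximal
    have hL0 : L ≠ ⊥ := fun h => hM.1 (le_bot_iff.1 (h ▸ hMJ.trans hJL))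
    have := hmax L (isTIdeal_of_maximal hL hL0)
      (fun h => hL.prop.one_notMem (h ▸ Submodule.mem_top)) (hMJ.trans hJL)
    exact this ▸ hJL
  · rintro ⟨h0, hM⟩
    refine ⟨isTIdeal_of_maximal hM h0,
      fun h => hM.prop.one_notMem (h ▸ Submodule.mem_top), fun J hJ hJt hMJ => ?_⟩
    exact le_antisymm (hM.le_of_ge (hJ.tProper hJt) hMJ) hMJ

lemma div_mem_locSet {P : Ideal R} {r s : R} (hs : s ≠ 0) :
    φ r / φ s ∈ locSet R P ↔ ∃ r' s', s' ∉ P ∧ r * s' = s * r' := by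
  have hs' : φ s ≠ 0 := by simpa using hs
  refine exists_congr fun r' => exists_congr fun s' => and_congr_right fun _ => ?_
  rw [← (IsFractionRing.injective R (FractionRing R)).eq_iff (a := r * s'), map_mul, map_mul,
    div_mul_eq_mul_div, div_eq_iff hs', mul_comm (φ r')]

/-- A domain is `t#` exactly when each maximal `t`-ideal `M` is detected by a fraction `r / s`
lying in every other localization at a maximal `t`-ideal but not in that at `M`. -/
lemma isTSharp_iff : IsTSharp R ↔ ∀ M ∈ tMax R, ∃ r s : R, s ≠ 0 ∧
    (∀ N ∈ tMax R, N ≠ M → ∃ r' s', s' ∉ N ∧ r * s' = s * r') ∧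
    ¬ ∃ r' s', s' ∉ M ∧ r * s' = s * r' := by
  constructor
  · intro h M hM
    have hne := h (tMax R \ {M}) (tMax R) Set.sdiff_subset le_rfl
      (fun he => (he.ge hM).2 rfl)
    have hsub : (⋂ N ∈ tMax R, locSet R N) ⊆ ⋂ N ∈ tMax R \ {M}, locSet R N :=
      Set.biInter_subset_biInter_left Set.sdiff_subset
    obtain ⟨x, hx, hx'⟩ := Set.not_subset.1 fun h' => hne (h'.antisymm hsub)
    simp only [Set.mem_iInter] at hx hx'
    obtain ⟨r, s, hs, rfl⟩ := IsFractionRing.div_surjective (A := R) x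
    have hs0 : s ≠ 0 := nonZeroDivisors.ne_zero hs
    simp only [div_mem_locSet hs0] at hx hx'
    refine ⟨r, s, hs0, fun N hN hNM => hx N ⟨hN, hNM⟩, fun hxM => hx' fun N hN => ?_⟩
    by_cases hNM : N = M
    · exact hNM ▸ hxM
    · exact hx N ⟨hN, hNM⟩
  · intro h
    have key : ∀ A B : Set (Ideal R), A ⊆ tMax R → B ⊆ tMax R →
        (⋂ M ∈ A, locSet R M) = (⋂ M ∈ B, locSet R M) → A ⊆ B := by
      intro A B hA hB he M hM
      by_contra hMB
      obtain ⟨r, s, hs, h1, h2⟩ := h M (hA hM)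
      have hmem : φ r / φ s ∈ ⋂ M ∈ B, locSet R M := Set.mem_iInter₂.2 fun N hN =>
        (div_mem_locSet hs).2 (h1 N (hB hN) fun hNM => hMB (hNM ▸ hN))
      rw [← he] at hmem
      exact h2 ((div_mem_locSet hs).1 (Set.mem_iInter₂.1 hmem M hM))
    exact fun A B hA hB hne he => hne ((key A B hA hB he).antisymm (key B A hB hA he.symm))

end TMax

/-! ### McCoy's theorem for families of multivariate polynomials -/

section McCoy

open MvPolynomial

universe u in
lemma nonempty_monomialOrder (τ : Type u) : Nonempty (MonomialOrder.{u, u} τ) := by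
  obtain ⟨_, _⟩ := exists_wellFoundedGT τ
  exact ⟨MonomialOrder.lex⟩

/-- McCoy's theorem for a family of polynomials: if some nonzero polynomial annihilates every
member of `G`, then so does some nonzero constant. A nonzero annihilator of least degree must
already be killed by all coefficients of all members of `G`, for otherwise multiplying it by a
coefficient would lower its degree. -/
lemma exists_const_annihilator {A τ : Type*} [CommRing A] (G : Set (MvPolynomial τ A))
    (p : MvPolynomial τ A) (hp : p ≠ 0) (h : ∀ g ∈ G, p * g = 0) :
    ∃ a : A, a ≠ 0 ∧ ∀ g ∈ G, ∀ i, a * coeff i g = 0 := by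
  obtain ⟨m⟩ := nonempty_monomialOrder τ
  induction hd : m.toSyn (m.degree p) using WellFoundedLT.induction generalizing p with
  | ind d ih =>
  subst hd
  by_cases H : ∀ g ∈ G, ∀ i, C (coeff i g) * p = 0
  · refine ⟨m.leadingCoeff p, m.leadingCoeff_ne_zero_iff.2 hp, fun g hg i => ?_⟩
    have := congrArg (coeff (m.degree p)) (H g hg i)
    rwa [coeff_C_mul, coeff_zero, mul_comm] at this
  push Not at H
  obtain ⟨g, hg, i₀, hi₀⟩ := H
  -- `i` is the largest exponent whose coefficient in `g` does not kill `p`.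
  obtain ⟨i, hi, hmax⟩ := Set.exists_max_image {i | C (coeff i g) * p ≠ 0} m.toSyn
    (g.support.finite_toSet.subset fun i hi => by
      rw [Finset.mem_coe, mem_support_iff]; rintro h0; exact hi (by simp [h0])) ⟨i₀, hi₀⟩
  have hlc : coeff (m.degree p) p * coeff i g = 0 := by
    have h0 : coeff (m.degree p + i) (p * g) = 0 := by rw [h g hg, coeff_zero]
    classical
    rw [coeff_mul, Finset.sum_eq_single (m.degree p, i)] at h0
    · exact h0
    · rintro ⟨a, b⟩ hab hne
      rw [Finset.HasAntidiagonal.mem_antidiagonal] at hab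
      by_cases hb : C (coeff b g) * p = 0
      · have := congrArg (coeff a) hb
        rwa [coeff_C_mul, coeff_zero, mul_comm] at this
      · have hbi := hmax b hb
        have hsum : m.toSyn a + m.toSyn b = m.toSyn (m.degree p) + m.toSyn i := by
          rw [← map_add, ← map_add]; exact congrArg _ hab
        have hne' : m.toSyn b ≠ m.toSyn i := by
          intro he
          have hbe := m.toSyn.injective he
          have hab' : a + b = m.degree p + i := hab
          subst hbe
          exact hne (by rw [add_right_cancel hab'])
        have : m.toSyn (m.degree p) < m.toSyn a := by
          by_contra hle
          exact absurd hsum (add_lt_add_of_le_of_lt (not_lt.1 hle) (hbi.lt_of_ne hne')).ne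
        show coeff a p * coeff b g = 0
        rw [m.coeff_eq_zero_of_lt this, zero_mul]
    · intro hn
      rw [Finset.HasAntidiagonal.mem_antidiagonal] at hn
      exact (hn rfl).elim
  refine ih _ ?_ (C (coeff i g) * p) hi (fun g' hg' => by rw [mul_assoc, h g' hg', mul_zero]) rfl
  have hle : m.toSyn (m.degree (C (coeff i g) * p)) ≤ m.toSyn (m.degree p) := by
    rw [C_mul']; exact m.degree_smul_le
  refine hle.lt_of_ne fun he => ?_
  have hne := (m.coeff_degree_ne_zero_iff).2 hi
  rw [m.toSyn.injective he, coeff_C_mul, mul_comm] at hne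
  exact hne hlc

end McCoy

/-! ### Maximal t-ideals of a polynomial ring -/

section Polynomial

open MvPolynomial

variable {R}

/-- All coefficients of all members of `G`. -/
def coeffSet (G : Set (MvPolynomial σ R)) : Set R := {r | ∃ g ∈ G, ∃ i, coeff i g = r}

lemma coeffSet_finite {G : Set (MvPolynomial σ R)} (hG : G.Finite) : (coeffSet G).Finite := by
  have : coeffSet G = ⋃ g ∈ G, Set.range fun i => coeff i g := by
    ext r; simp [coeffSet]
  rw [this]
  refine hG.biUnion fun g _ => ((g.support.finite_toSet.image fun i => coeff i g).union
    (Set.finite_singleton 0)).subset ?_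
  rintro _ ⟨i, rfl⟩
  by_cases hi : i ∈ g.support
  · exact Or.inl ⟨i, hi, rfl⟩
  · exact Or.inr (by simpa using hi)

/-- If the coefficients of `G` have trivial inverse, a polynomial `p / b` with constant
denominator that multiplies `G` into `R[{X_α}]` is itself in `R[{X_α}]`. -/
lemma C_dvd_of_isGV {G : Set (MvPolynomial σ R)} (hG : IsGV (coeffSet G)) {b : R} (hb : b ≠ 0)
    {p : MvPolynomial σ R} (h : ∀ g ∈ G, C b ∣ p * g) : C b ∣ p := by
  let q := Ideal.Quotient.mk (Ideal.span {b})
  have hq : ∀ r, q r = 0 ↔ b ∣ r := fun r => by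
    rw [Ideal.Quotient.eq_zero_iff_mem, Ideal.mem_span_singleton]
  have hC : ∀ f : MvPolynomial σ R, C b ∣ f ↔ map q f = 0 :=
    fun f => C_dvd_iff_map_hom_eq_zero q b hq f
  by_contra hcon
  rw [hC] at hcon
  obtain ⟨a, ha, hann⟩ := exists_const_annihilator (map q '' G) (map q p) hcon (by
    rintro _ ⟨g, hg, rfl⟩
    rw [← map_mul]
    exact (hC _).1 (h g hg))
  obtain ⟨a, rfl⟩ := Ideal.Quotient.mk_surjective a
  refine ha ((hq a).2 (hG a b hb ?_))
  rintro _ ⟨g, hg, i, rfl⟩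
  rw [← hq, map_mul, ← coeff_map]
  exact hann _ ⟨g, hg, rfl⟩ i

/-- If the inverse of `G ⊆ P[{X_α}]` were trivial, testing it on constant fractions would make
the inverse of the coefficients of `G`, which lie in `P`, trivial. -/
lemma tProper_map_C {P : Ideal R} (hP : TProper P) :
    TProper (Ideal.map (C : R →+* MvPolynomial σ R) P) := by
  intro G hG hGP hu
  refine hP (coeffSet G) (coeffSet_finite hG) ?_ ?_
  · rintro _ ⟨g, hg, i, rfl⟩
    exact mem_map_C_iff.1 (hGP hg) i
  · intro a b hb h
    have h1 : C b ∣ (C a : MvPolynomial σ R) := hu _ _ (by simpa using hb) fun g hg => by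
      rw [C_dvd_iff_dvd_coeff]
      intro i
      rw [coeff_C_mul]
      exact h _ ⟨g, hg, i, rfl⟩
    simpa using (C_dvd_iff_dvd_coeff _ _).1 h1 0

/-- The two kinds of maximal `t`-ideals of `R[{X_α}]`: extensions of maximal `t`-ideals of `R`
(when the content of the ideal is `t`-proper), and those containing finitely many polynomials whose coefficients have trivial inverse. -/
lemma tMax_mvPolynomial [IsDomain R] {Q : Ideal (MvPolynomial σ R)}
    (hQ : Q ∈ tMax (MvPolynomial σ R)) :
    (∃ P ∈ tMax R, Q = Ideal.map C P) ∨
      ∃ G : Set (MvPolynomial σ R), G.Finite ∧ G ⊆ Q ∧ IsGV (coeffSet G) := by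
  rw [mem_tMax_iff] at hQ
  by_cases hc : TProper (mvContentIdeal R Q)
  · left
    obtain ⟨P, hle, hP⟩ := hc.exists_le_maximal
    have hQP : Q ≤ Ideal.map C P := fun f hf => mem_map_C_iff.2 fun i =>
      hle (Ideal.subset_span ⟨f, hf, i, rfl⟩)
    refine ⟨P, mem_tMax_iff.2 ⟨?_, hP⟩, hQ.2.eq_of_le (tProper_map_C hP.prop) hQP⟩
    rintro rfl
    exact hQ.1 (le_bot_iff.1 (by simpa using hQP))
  · right
    obtain ⟨S, hS, hSQ, hu⟩ := exists_isGV_of_not_tProper hc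
    have key : ∀ s ∈ mvContentIdeal R Q, ∃ G : Set (MvPolynomial σ R), G.Finite ∧ G ⊆ Q ∧
        s ∈ Ideal.span (coeffSet G) := by
      intro s hs
      induction hs using Submodule.span_induction with
      | mem x hx =>
        obtain ⟨f, hf, i, rfl⟩ := hx
        exact ⟨{f}, Set.finite_singleton f, by simpa using hf,
          Ideal.subset_span ⟨f, rfl, i, rfl⟩⟩
      | zero => exact ⟨∅, Set.finite_empty, by simp, zero_mem _⟩
      | add x y _ _ hx hy =>
        obtain ⟨G, hG, hGQ, hxG⟩ := hx
        obtain ⟨H, hH, hHQ, hyH⟩ := hy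
        refine ⟨G ∪ H, hG.union hH, Set.union_subset hGQ hHQ, add_mem ?_ ?_⟩
        · refine Ideal.span_mono ?_ hxG
          rintro r ⟨g, hg, hr⟩
          exact ⟨g, Or.inl hg, hr⟩
        · refine Ideal.span_mono ?_ hyH
          rintro r ⟨g, hg, hr⟩
          exact ⟨g, Or.inr hg, hr⟩
      | smul c x _ hx =>
        obtain ⟨G, hG, hGQ, hxG⟩ := hx
        exact ⟨G, hG, hGQ, Ideal.mul_mem_left _ c hxG⟩
    choose! G hG hGQ hsG using key
    refine ⟨⋃ s ∈ S, G s, hS.biUnion fun s hs => hG s (hSQ hs),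
      Set.iUnion₂_subset fun s hs => hGQ s (hSQ hs), ?_⟩
    intro a b hb h
    refine hu a b hb fun s hs => dvd_of_mem_span (S := coeffSet (G s)) ?_ (hsG s (hSQ hs))
    rintro _ ⟨g, hg, i, rfl⟩
    exact h _ ⟨g, Set.mem_biUnion hs hg, i, rfl⟩

lemma not_subset_map_C {G : Set (MvPolynomial σ R)} (hG : G.Finite) (hu : IsGV (coeffSet G))
    {P : Ideal R} (hP : TProper P) : ∃ g ∈ G, g ∉ Ideal.map C P := by
  by_contra hcon
  push Not at hcon
  refine hP _ (coeffSet_finite hG) ?_ hu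
  rintro _ ⟨g, hg, i, rfl⟩
  exact mem_map_C_iff.1 (hcon g hg) i

variable [IsDomain R]

/-- If `G` has coefficients with trivial inverse, a fraction `A / B` that multiplies `G` into
`R[{X_α}]` and equals `x / c` for a nonzero constant `c` lies in `R[{X_α}]`. -/
lemma dvd_of_isGV {G : Set (MvPolynomial σ R)} (hG : IsGV (coeffSet G))
    {A B x : MvPolynomial σ R} {c : R} (hc : c ≠ 0) (hB : B ≠ 0) (hx : A * C c = B * x)
    (h : ∀ g ∈ G, B ∣ A * g) : B ∣ A := by
  have hc' : (C c : MvPolynomial σ R) ≠ 0 := by simpa using hc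
  obtain ⟨z, rfl⟩ : C c ∣ x := C_dvd_of_isGV hG hc fun g hg => by
    obtain ⟨y, hy⟩ := h g hg
    refine ⟨y, mul_left_cancel₀ hB ?_⟩
    linear_combination (-g) * hx + C c * hy
  exact ⟨z, mul_right_cancel₀ hc' (by linear_combination hx)⟩

/-- The ideals of the second kind in `tMax_mvPolynomial` meet `R` in zero: a nonzero constant
together with `G` would have trivial inverse. -/
lemma C_mem_upper {Q : Ideal (MvPolynomial σ R)} (hQ : TProper Q) {G : Set (MvPolynomial σ R)}
    (hGf : G.Finite) (hGQ : G ⊆ Q) (hG : IsGV (coeffSet G)) {c : R} (hc : C c ∈ Q) : c = 0 := by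
  by_contra h0
  refine hQ (insert (C c) G) (hGf.insert _) (Set.insert_subset hc hGQ) fun A B hB h => ?_
  obtain ⟨x, hx⟩ := h _ (Set.mem_insert _ _)
  exact dvd_of_isGV hG h0 hB hx fun g hg => h g (Set.mem_insert_of_mem _ hg)

/-- An upper to zero that is a maximal `t`-ideal is, up to nonzero constants, generated by one
of its elements `f`: its extension to `K[{X_α}]` is a principal prime, since `f` together with
an element prime to it over `K` and with `G` would have trivial inverse. -/
lemma exists_generator {Q : Ideal (MvPolynomial σ R)} (hQ : Q ∈ tMax (MvPolynomial σ R))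
    {G : Set (MvPolynomial σ R)} (hGf : G.Finite) (hGQ : G ⊆ Q) (hG : IsGV (coeffSet G)) :
    ∃ f ∈ Q, f ≠ 0 ∧ ∀ q ∈ Q, ∃ c : R, c ≠ 0 ∧ f ∣ C c * q := by
  rw [mem_tMax_iff] at hQ
  have hQp : Q.IsPrime := isPrime_of_maximal hQ.2
  let K := FractionRing R
  let M : Submonoid (MvPolynomial σ R) := (nonZeroDivisors R).map (C (σ := σ))
  let _ : Algebra (MvPolynomial σ R) (MvPolynomial σ K) := algebraMvPolynomial
  let ψ := algebraMap (MvPolynomial σ R) (MvPolynomial σ K)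
  have hψ : Function.Injective ψ :=
    map_injective (algebraMap R K) (IsFractionRing.injective R K)
  have hdisj : Disjoint (M : Set (MvPolynomial σ R)) Q := by
    rw [Set.disjoint_left]
    rintro _ ⟨c, hc, rfl⟩ hcQ
    exact nonZeroDivisors.ne_zero hc (C_mem_upper hQ.2.prop hGf hGQ hG hcQ)
  have hprime : (Q.map ψ).IsPrime := IsLocalization.isPrime_of_isPrime_disjoint M _ Q hQp hdisj
  have hcomap : (Q.map ψ).comap ψ = Q :=
    IsLocalization.under_map_of_isPrime_disjoint M (MvPolynomial σ K) hQp hdisj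
  have hne : Q.map ψ ≠ ⊥ := fun h => hQ.1 ((Ideal.map_eq_bot_iff_of_injective hψ).1 h)
  obtain ⟨π, hπQ, hπ⟩ := hprime.exists_mem_prime_of_ne_bot hne
  obtain ⟨⟨f, ⟨_, d, hd, rfl⟩⟩, hf⟩ := IsLocalization.surj M π
  have hunit : IsUnit (ψ (C d)) := IsLocalization.map_units _ (⟨C d, d, hd, rfl⟩ : M)
  have hf' : ψ f = π * ψ (C d) := hf.symm
  have hfp : Prime (ψ f) := by
    rw [hf']; exact (associated_mul_unit_right π _ hunit).prime hπ
  have hfQ : f ∈ Q := by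
    rw [← hcomap, Ideal.mem_comap, hf']; exact Ideal.mul_mem_right _ _ hπQ
  -- Divisibility over `K` means divisibility over `R` up to a nonzero constant.
  have hclear : ∀ u v : MvPolynomial σ R, ψ u ∣ ψ v → ∃ c : R, c ≠ 0 ∧ u ∣ C c * v := by
    rintro u v ⟨w, hw⟩
    obtain ⟨⟨w', ⟨_, c, hc, rfl⟩⟩, hw'⟩ := IsLocalization.surj M w
    have hw'' : w * ψ (C c) = ψ w' := hw'
    refine ⟨c, nonZeroDivisors.ne_zero hc, w', hψ ?_⟩
    rw [map_mul, map_mul, ← hw'', hw]; ring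
  have hf0 : f ≠ 0 := by rintro rfl; exact hfp.ne_zero (map_zero ψ)
  refine ⟨f, hfQ, hf0, fun q hq => hclear f q ?_⟩
  by_contra hndvd
  refine hQ.2.prop (insert f (insert q G)) ((hGf.insert _).insert _)
    (Set.insert_subset hfQ (Set.insert_subset hq hGQ)) fun A B hB h => ?_
  obtain ⟨x, hx⟩ := h f (Set.mem_insert _ _)
  obtain ⟨y, hy⟩ := h q (Set.mem_insert_of_mem _ (Set.mem_insert _ _))
  have hxy : x * q = y * f := mul_left_cancel₀ hB (by linear_combination (-q) * hx + f * hy)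
  have hfx : ψ f ∣ ψ x := by
    have : ψ f ∣ ψ x * ψ q := ⟨ψ y, by rw [← map_mul, hxy, map_mul, mul_comm]⟩
    exact (hfp.dvd_or_dvd this).resolve_right hndvd
  obtain ⟨c, hc, z, hz⟩ := hclear f x hfx
  refine dvd_of_isGV hG (x := z) hc hB (mul_right_cancel₀ hf0 ?_)
    fun g hg => h g (Set.mem_insert_of_mem _ (Set.mem_insert_of_mem _ hg))
  linear_combination C c * hx + B * hz

end Polynomial

/-! ### Separating fractions for the polynomial ring -/

/-- **Theorem (3.4).**  If `R` is a `t#`-domain, then so is the polynomial ring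
`R[{X_α}]` in any family of indeterminates. -/
theorem tsharp_polynomial_ring (R : Type*) [CommRing R] [IsDomain R] (σ : Type*)
    (h : IsTSharp R) : IsTSharp (MvPolynomial σ R) := by
  rw [isTSharp_iff] at h ⊢
  intro Q hQ
  have hQmax := (mem_tMax_iff.1 hQ).2
  have hQp : Q.IsPrime := isPrime_of_maximal hQmax
  rcases tMax_mvPolynomial hQ with ⟨P, hP, rfl⟩ | ⟨G, hGf, hGQ, hG⟩
  · -- The constant fraction separating `P` in `R` also separates `P[{X_α}]`.
    obtain ⟨r, s, hs, h1, h2⟩ := h P hP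
    refine ⟨MvPolynomial.C r, MvPolynomial.C s, by simpa using hs, fun N hN hNQ => ?_, ?_⟩
    · rcases tMax_mvPolynomial hN with ⟨P', hP', rfl⟩ | ⟨G, hGf, hGN, hG⟩
      · obtain ⟨r', s', hs', he⟩ := h1 P' hP' fun hPP => hNQ (by rw [hPP])
        refine ⟨MvPolynomial.C r', MvPolynomial.C s', fun hmem => hs' ?_, by
          rw [← map_mul, ← map_mul, he]⟩
        simpa using MvPolynomial.mem_map_C_iff.1 hmem 0
      · exact ⟨MvPolynomial.C r, MvPolynomial.C s,
          fun hmem => hs (C_mem_upper (mem_tMax_iff.1 hN).2.prop hGf hGN hG hmem), mul_comm _ _⟩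
    · rintro ⟨f, g, hg, he⟩
      rw [MvPolynomial.mem_map_C_iff] at hg
      push Not at hg
      obtain ⟨i, hi⟩ := hg
      refine h2 ⟨MvPolynomial.coeff i f, MvPolynomial.coeff i g, hi, ?_⟩
      rw [← MvPolynomial.coeff_C_mul, he, MvPolynomial.coeff_C_mul]
  · obtain ⟨f, hfQ, hf0, hgen⟩ := exists_generator hQ hGf hGQ hG
    choose! c hc0 hc using hgen
    have hCQ : ∀ a : R, MvPolynomial.C a ∈ Q → a = 0 :=
      fun a ha => C_mem_upper hQmax.prop hGf hGQ hG ha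
    -- A common constant `d` with `f ∣ d g` for all `g ∈ G`; the separating fraction is `d / f`.
    let d : R := ∏ g ∈ hGf.toFinset, c g
    have hd0 : d ≠ 0 := Finset.prod_ne_zero_iff.2 fun g hg =>
      hc0 g (hGQ (hGf.mem_toFinset.1 hg))
    have hd : ∀ g ∈ G, f ∣ MvPolynomial.C d * g := fun g hg => by
      obtain ⟨e, he⟩ : c g ∣ d := Finset.dvd_prod_of_mem c (hGf.mem_toFinset.2 hg)
      rw [he, mul_comm (c g), map_mul, mul_assoc]
      exact (hc g (hGQ hg)).mul_left _
    refine ⟨MvPolynomial.C d, f, hf0, fun N hN hNQ => ?_, ?_⟩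
    · have hNmax := (mem_tMax_iff.1 hN).2
      rcases tMax_mvPolynomial hN with ⟨P, hP, rfl⟩ | ⟨H, hHf, hHN, hH⟩
      · obtain ⟨g, hg, hgP⟩ := not_subset_map_C hGf hG (mem_tMax_iff.1 hP).2.prop
        obtain ⟨k, hk⟩ := hd g hg
        exact ⟨k, g, hgP, hk⟩
      · refine ⟨MvPolynomial.C d, f, fun hfN => hNQ ?_, mul_comm _ _⟩
        have hNp : N.IsPrime := isPrime_of_maximal hNmax
        refine (hQmax.eq_of_le hNmax.prop fun q hq => ?_).symm
        have hmem : MvPolynomial.C (c q) * q ∈ N := N.mem_of_dvd (hc q hq) hfN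
        refine (hNp.mem_or_mem hmem).resolve_left fun hcN => hc0 q hq ?_
        exact C_mem_upper hNmax.prop hHf hHN hH hcN
    · rintro ⟨r, s, hs, he⟩
      have hmem : MvPolynomial.C d * s ∈ Q := he ▸ Q.mul_mem_right r hfQ
      exact hd0 (hCQ d ((hQp.mem_or_mem hmem).resolve_right hs))

end TSharpPaper
end
end
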